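/- A graph G is 1-copwin if and only if it is dismantlable: its vertices can be ordered v₁, …, v_n such that for each i < n, there is some j > i with the closed neighborhood of v_i in the subgraph induced by {v_i, …, v_n} contained in the closed neighborhood of v_j in that subgraph. -/

import Mathlib

open SimpleGraph

/-- A checker move: stay put or slide along an edge. -/
def ValidMove {V : Type*} (G : SimpleGraph V) (u v : V) : Prop := u = v ∨ G.Adj u v

/-- From position (cops `c`, robber `r`), with the cops to move, the cops can
force capture in finitely many rounds: either some cop can move onto the robber,
or the cops have a move after which every robber move leads to a winning position. -/
inductive CopsWinFrom {V : Type*} (G : SimpleGraph V) (k : ℕ) :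
    (Fin k → V) → V → Prop where
  | catch (c : Fin k → V) (r : V) (c' : Fin k → V)
      (hc : ∀ i, ValidMove G (c i) (c' i)) (hcatch : ∃ i, c' i = r) :
      CopsWinFrom G k c r
  | step (c : Fin k → V) (r : V) (c' : Fin k → V)
      (hc : ∀ i, ValidMove G (c i) (c' i))
      (h : ∀ r', ValidMove G r r' → CopsWinFrom G k c' r') :
      CopsWinFrom G k c r

/-- `k` cops have a winning strategy on `G`. -/
def CopWin {V : Type*} (G : SimpleGraph V) (k : ℕ) : Prop :=
  ∃ init : Fin k → V, ∀ r : V, (∃ i, init i = r) ∨ CopsWinFrom G k init r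

/-- The cop number: least `k` such that `k` cops win. -/
noncomputable def copNumber {V : Type*} (G : SimpleGraph V) : ℕ :=
  sInf {k | CopWin G k}

/-- `p` is a weak cover of `H` by `G`. -/
def IsWeakCover {V W : Type*} (p : V → W) (G : SimpleGraph V) (H : SimpleGraph W) : Prop :=
  Function.Surjective p ∧ ∀ u : V, p '' (G.neighborSet u) = H.neighborSet (p u)

/-- The one-cop game played inside a finite set `S` of vertices. -/
inductive SWin {V : Type*} (G : SimpleGraph V) (S : Finset V) : V → V → Prop where
  | grab (c r : V) (h : ValidMove G c r) : SWin G S c r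
  | step (c r c' : V) (hS : c' ∈ S) (hc : ValidMove G c c')
      (h : ∀ r' ∈ S, ValidMove G r r' → SWin G S c' r') : SWin G S c r

/-- The cop wins the game inside `S`. -/
def SCop {V : Type*} (G : SimpleGraph V) (S : Finset V) : Prop :=
  ∃ c ∈ S, ∀ r ∈ S, SWin G S c r

/-- Inside `S`, the vertex `w` dominates `u`. -/
def SDom {V : Type*} (G : SimpleGraph V) (S : Finset V) (u w : V) : Prop :=
  ∀ x ∈ S, ValidMove G u x → ValidMove G w x

/-- The ordering condition of the statement. -/
def SOrd {V : Type*} (G : SimpleGraph V) (n : ℕ) (v : Fin n → V) : Prop :=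
  ∀ i : Fin n, (i : ℕ) < n - 1 → ∃ j : Fin n, i < j ∧
    ∀ w : V, (∃ m : Fin n, i ≤ m ∧ v m = w) →
      (w = v i ∨ G.Adj (v i) w) → (w = v j ∨ G.Adj (v j) w)

section
variable {V : Type*} {G : SimpleGraph V}

theorem ValidMove.rfl' {u : V} : ValidMove G u u := Or.inl rfl

theorem ValidMove.symm' {u v : V} (h : ValidMove G u v) : ValidMove G v u :=
  h.elim (fun e => Or.inl e.symm) (fun e => Or.inr e.symm)

theorem exists_corner {S : Finset V} (h : SCop G S) (hS : 1 < S.card) :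
    ∃ u ∈ S, ∃ w ∈ S, w ≠ u ∧ SDom G S u w := by
  by_contra! hno
  have key : ∀ c r, SWin G S c r → r ∈ S → ValidMove G c r := by
    intro c r hw
    induction hw with
    | grab c r h => exact fun _ => h
    | step c r c' hS hc h ih =>
      intro hr
      by_cases e : c' = r
      · exact e ▸ hc
      · exact absurd (fun x hx hm => ih x hx hm hx) (hno r hr c' hS e)
  obtain ⟨c, hc, hw⟩ := h
  obtain ⟨u, hu, hne⟩ := Finset.exists_mem_ne hS c
  exact hno u hu c hc hne.symm (fun x hx _ => key c x (hw x hx) hx)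

theorem retr [DecidableEq V] {S : Finset V} {u w : V} (hd : SDom G S u w) {a b : V}
    (ha : a ∈ S) (hb : b ∈ S) (h : ValidMove G a b) :
    ValidMove G (if a = u then w else a) (if b = u then w else b) := by
  split_ifs with h1 h2 h2
  · exact .rfl'
  · subst h1; exact hd b hb h
  · subst h2; exact (hd a ha h.symm').symm'
  · exact h

theorem scop_erase [DecidableEq V] {S : Finset V} {u w : V} (hw : w ∈ S)
    (hne : w ≠ u) (hd : SDom G S u w) (h : SCop G S) : SCop G (S.erase u) := by
  have hf : ∀ c ∈ S, (if c = u then w else c) ∈ S.erase u := by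
    intro c hc
    split_ifs with h1 <;> simp [*]
  have key : ∀ c r, SWin G S c r → c ∈ S → r ∈ S.erase u →
      SWin G (S.erase u) (if c = u then w else c) r := by
    intro c r hwin
    induction hwin with
    | grab c r h =>
      intro hc hr
      have := retr hd hc (Finset.mem_of_mem_erase hr) h
      rw [if_neg (Finset.ne_of_mem_erase hr)] at this
      exact .grab _ _ this
    | step c r c' hS hm h ih =>
      intro hc hr
      exact .step _ _ _ (hf c' hS) (retr hd hc hS hm)
        (fun r' hr' hm' => ih r' (Finset.mem_of_mem_erase hr') hm' hS hr')
  obtain ⟨c, hc, hwin⟩ := h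
  exact ⟨_, hf c hc, fun r hr => key c r (hwin r (Finset.mem_of_mem_erase hr)) hc hr⟩

theorem scop_of_erase [DecidableEq V] {S : Finset V} {u w : V} (hw : w ∈ S)
    (hne : w ≠ u) (hd : SDom G S u w) (h : SCop G (S.erase u)) : SCop G S := by
  have hf : ∀ c ∈ S, (if c = u then w else c) ∈ S.erase u := by
    intro c hc
    split_ifs with h1 <;> simp [*]
  have key : ∀ c s, SWin G (S.erase u) c s → ∀ r ∈ S, s = (if r = u then w else r) →
      SWin G S c r := by
    intro c s hwin
    induction hwin with
    | grab c s hcs =>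
      intro r hr e
      split_ifs at e with h1
      · subst h1; subst e
        exact .step _ _ s hw hcs (fun r' hr' hm => .grab _ _ (hd r' hr' hm))
      · subst e; exact .grab _ _ hcs
    | step c s c' hS hm h ih =>
      intro r hr e
      refine .step _ _ c' (Finset.mem_of_mem_erase hS) hm (fun r' hr' hm' => ?_)
      exact ih _ (hf r' hr') (e ▸ retr hd hr hr' hm') r' hr' rfl
  obtain ⟨c, hc, hwin⟩ := h
  exact ⟨c, Finset.mem_of_mem_erase hc, fun r hr => key c _ (hwin _ (hf r hr)) r hr rfl⟩

theorem exists_order [DecidableEq V] : ∀ (k : ℕ) (S : Finset V), S.card = k + 1 → SCop G S →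
    ∃ v : Fin (k + 1) → V, Function.Injective v ∧ (∀ x, x ∈ S ↔ ∃ i, v i = x) ∧
      SOrd G (k + 1) v := by
  intro k
  induction k with
  | zero =>
    intro S hS h
    obtain ⟨a, rfl⟩ := Finset.card_eq_one.1 hS
    refine ⟨fun _ => a, fun i j _ => Fin.ext (by omega), fun x => ?_, fun i hi => by omega⟩
    simp [eq_comm]
  | succ k ih =>
    intro S hS h
    obtain ⟨u, hu, w, hw, hne, hd⟩ := exists_corner h (by omega)
    obtain ⟨v, hv, hr, ho⟩ := ih (S.erase u) (by rw [Finset.card_erase_of_mem hu]; omega)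
      (scop_erase hw hne hd h)
    have hmem : ∀ x, x ∈ S ↔ ∃ i, (Fin.cons u v : Fin (k + 2) → V) i = x := by
      intro x
      rw [Fin.exists_fin_succ]
      simp only [Fin.cons_zero, Fin.cons_succ, ← hr, Finset.mem_erase]
      by_cases e : u = x
      · subst e; simp [hu]
      · simp [e, Ne.symm e]
    refine ⟨Fin.cons u v, Fin.cons_injective_iff.2 ⟨?_, hv⟩, hmem, ?_⟩
    · rintro ⟨i, hi⟩
      exact absurd ((hr u).2 ⟨i, hi⟩) (by simp)
    · intro i hi
      refine Fin.cases ?_ (fun i hi => ?_) i hi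
      · intro _
        obtain ⟨j, hj⟩ := (hr w).1 (by simp [hne, hw])
        refine ⟨j.succ, Fin.succ_pos j, ?_⟩
        rintro x ⟨m, _, hm⟩ hx
        simp only [Fin.cons_zero, Fin.cons_succ, hj] at hx ⊢
        have := hd x ((hmem x).2 ⟨m, hm⟩) (hx.imp Eq.symm id)
        exact this.imp Eq.symm id
      · obtain ⟨j, hij, hj⟩ := ho i (by simp at hi ⊢; omega)
        refine ⟨j.succ, Fin.succ_lt_succ_iff.2 hij, ?_⟩
        rintro x ⟨m, him, hm⟩ hx
        simp only [Fin.cons_succ] at hx ⊢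
        refine hj x ?_ hx
        induction m using Fin.cases with
        | zero => simp at him
        | succ m => exact ⟨m, Fin.succ_le_succ_iff.1 him, by simpa using hm⟩

theorem scop_of_order [DecidableEq V] : ∀ (k : ℕ) (v : Fin (k + 1) → V) (S : Finset V),
    Function.Injective v → (∀ x, x ∈ S ↔ ∃ i, v i = x) → SOrd G (k + 1) v → SCop G S := by
  intro k
  induction k with
  | zero =>
    intro v S _ hS _
    refine ⟨v 0, (hS _).2 ⟨0, rfl⟩, fun r hr => ?_⟩
    obtain ⟨i, rfl⟩ := (hS r).1 hr
    rw [show i = 0 from Fin.ext (by omega)]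
    exact .grab _ _ .rfl'
  | succ k ih =>
    intro v S hv hS ho
    obtain ⟨j, hj, hd⟩ := ho 0 (by simp)
    refine scop_of_erase (u := v 0) (w := v j) ((hS _).2 ⟨j, rfl⟩)
      (fun e => hj.ne' (hv e)) ?_ ?_
    · intro x hx hm
      obtain ⟨m, hm'⟩ := (hS x).1 hx
      exact (hd x ⟨m, Fin.zero_le m, hm'⟩ (hm.imp Eq.symm id)).imp Eq.symm id
    · refine ih (fun i => v i.succ) _ (fun a b e => Fin.succ_injective _ (hv e)) ?_ ?_
      · intro x
        rw [Finset.mem_erase, hS, Fin.exists_fin_succ]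
        constructor
        · rintro ⟨h1, h2 | h2⟩
          · exact absurd h2.symm h1
          · exact h2
        · rintro ⟨i, rfl⟩
          exact ⟨fun e => Fin.succ_ne_zero i (hv e), Or.inr ⟨i, rfl⟩⟩
      · intro i hi
        obtain ⟨j, hij, hj⟩ := ho i.succ (by simp at hi ⊢; omega)
        induction j using Fin.cases with
        | zero => simp at hij
        | succ j =>
          refine ⟨j, Fin.succ_lt_succ_iff.1 hij, ?_⟩
          rintro x ⟨m, him, hm⟩ hx
          exact hj x ⟨m.succ, Fin.succ_le_succ_iff.2 him, hm⟩ hx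

theorem copWin_iff [Fintype V] : CopWin G 1 ↔ SCop G Finset.univ := by
  have h1 : ∀ c r, CopsWinFrom G 1 c r → SWin G Finset.univ (c 0) r := by
    intro c r h
    induction h with
    | step c r c' hc h ih =>
      exact .step _ _ (c' 0) (Finset.mem_univ _) (hc 0) (fun r' _ hm => ih r' hm)
    | _ =>
      rename_i c r c' hc hcatch
      obtain ⟨i, rfl⟩ := hcatch
      rw [Subsingleton.elim i 0]
      exact .grab _ _ (hc 0)
  have h2 : ∀ c r, SWin G Finset.univ c r → CopsWinFrom G 1 (fun _ => c) r := by
    intro c r h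
    induction h with
    | grab c r h => exact CopsWinFrom.catch _ _ (fun _ => r) (fun _ => h) ⟨0, rfl⟩
    | step c r c' _ hc h ih =>
      exact .step _ _ (fun _ => c') (fun _ => hc) (fun r' hm => ih r' (Finset.mem_univ _) hm)
  constructor
  · rintro ⟨c, hc⟩
    refine ⟨c 0, Finset.mem_univ _, fun r _ => ?_⟩
    rcases hc r with ⟨i, rfl⟩ | h
    · rw [Subsingleton.elim i 0]
      exact .grab _ _ .rfl'
    · exact h1 _ _ h
  · rintro ⟨c, _, hc⟩
    exact ⟨fun _ => c, fun r => Or.inr (h2 _ _ (hc r (Finset.mem_univ _)))⟩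
end

/-- Nowakowski–Winkler / Quilliot: a finite connected graph is
1-copwin iff it is dismantlable, i.e. its vertices can be ordered
`v 0, …, v (n-1)` so that each non-final `v i` has its closed neighborhood in
the subgraph induced on `{v i, …, v (n-1)}` contained in the closed
neighborhood of some later `v j` in that subgraph. -/
theorem stmt17 {V : Type*} [Fintype V] [Nonempty V] (G : SimpleGraph V)
    (hconn : G.Connected) :
    CopWin G 1 ↔
      ∃ (n : ℕ) (v : Fin n → V), Function.Bijective v ∧
        ∀ i : Fin n, (i : ℕ) < n - 1 → ∃ j : Fin n, i < j ∧
          ∀ w : V, (∃ m : Fin n, i ≤ m ∧ v m = w) →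
            (w = v i ∨ G.Adj (v i) w) → (w = v j ∨ G.Adj (v j) w) := by
  classical
  rw [copWin_iff]
  constructor
  · intro h
    have hpos : 0 < Fintype.card V := Fintype.card_pos
    obtain ⟨v, hv, hr, ho⟩ := exists_order (G := G) (Fintype.card V - 1) Finset.univ
      (by rw [Finset.card_univ]; omega) h
    exact ⟨_, v, ⟨hv, fun x => (hr x).1 (Finset.mem_univ x)⟩, ho⟩
  · rintro ⟨n, v, hv, ho⟩
    cases n with
    | zero =>
      obtain ⟨i, _⟩ := hv.2 (Classical.arbitrary V)
      exact i.elim0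
    | succ k =>
      exact scop_of_order k v Finset.univ hv.1 (fun x => by simpa using hv.2 x) ho
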